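/- Let Σ ⊂ ℝ^{2n} be a smooth compact hypersurface with exterior unit normal ν satisfying ⟨ν(z), z⟩ > R₁ for all z ∈ Σ, with contact form α_x(X) = ½⟨X, Jx⟩. If γ : [0, T] → Σ is a T-periodic Reeb orbit (γ'(t) = R_α(γ(t))), then T ≥ π·R₁². -/

import Mathlib

open scoped RealInnerProductSpace

/-!
Since `α(γ') = 1`, twice the period of a Reeb orbit is `∫ ⟪γ', Jγ⟫`. Subtracting from `γ` its mean
does not change this integral, so Cauchy–Schwarz and Wirtinger's inequality bound it by
`T / 2π * ∫ ‖γ'‖²`. Finally `Jγ'` is a multiple `c ν` of the unit normal with `c ⟪ν, γ⟫ = -2`, so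
`‖γ'‖ = |c| ≤ 2 / R₁`, and `2T ≤ T / 2π * T * 4 / R₁²`.

Wirtinger's inequality is Parseval's identity for complex-valued loops. It passes to
finite-dimensional spaces through coordinates, and to Hilbert spaces because a compact curve stays
within `ε` of a finite-dimensional subspace.
-/

open MeasureTheory Set Real

section Preliminaries

theorem memLp_Ioc_of_continuousOn {E : Type*} [NormedAddCommGroup E] {a b : ℝ} {f : ℝ → E}
    (hf : ContinuousOn f (Icc a b)) (p : ENNReal) : MemLp f p (volume.restrict (Ioc a b)) := by
  obtain ⟨C, hC⟩ := isCompact_Icc.exists_bound_of_continuousOn hf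
  refine .of_bound ((hf.mono Ioc_subset_Icc_self).aestronglyMeasurable measurableSet_Ioc) C ?_
  exact ae_restrict_of_forall_mem measurableSet_Ioc fun x hx => hC x (Ioc_subset_Icc_self hx)

theorem integral_norm_mul_norm_le_sqrt_mul_sqrt {α E F : Type*} [MeasurableSpace α]
    {μ : Measure α} [NormedAddCommGroup E] [NormedAddCommGroup F] {f : α → E} {g : α → F}
    (hf : MemLp f 2 μ) (hg : MemLp g 2 μ) :
    ∫ x, ‖f x‖ * ‖g x‖ ∂μ ≤ √(∫ x, ‖f x‖ ^ 2 ∂μ) * √(∫ x, ‖g x‖ ^ 2 ∂μ) := by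
  simpa [Real.sqrt_eq_rpow] using
    integral_mul_norm_le_Lp_mul_Lq (μ := μ) (f := fun x => ‖f x‖) (g := fun x => ‖g x‖)
      Real.HolderConjugate.two_two (by simpa using hf.norm) (by simpa using hg.norm)

theorem integrable_inner_of_memLp_two {𝕜 α E : Type*} [RCLike 𝕜] [MeasurableSpace α]
    {μ : Measure α} [NormedAddCommGroup E] [InnerProductSpace 𝕜 E] {f g : α → E}
    (hf : MemLp f 2 μ) (hg : MemLp g 2 μ) : Integrable (fun x => inner 𝕜 (f x) (g x)) μ :=
  (hf.norm.integrable_mul hg.norm).mono' (hf.1.inner hg.1)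
    (.of_forall fun x => norm_inner_le_norm (f x) (g x))

theorem exists_finiteDimensional_forall_norm_starProjection_orthogonal_lt {𝕜 E : Type*} [RCLike 𝕜]
    [NormedAddCommGroup E] [InnerProductSpace 𝕜 E] {s : Set E} (hs : TotallyBounded s)
    {ε : ℝ} (hε : 0 < ε) :
    ∃ (K : Submodule 𝕜 E) (_ : FiniteDimensional 𝕜 K), ∀ x ∈ s, ‖Kᗮ.starProjection x‖ < ε := by
  obtain ⟨t, ht, hst⟩ := Metric.totallyBounded_iff.1 hs ε hε
  have := FiniteDimensional.span_of_finite 𝕜 ht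
  refine ⟨Submodule.span 𝕜 t, this, fun x hx => ?_⟩
  obtain ⟨y, hy, hxy⟩ := mem_iUnion₂.1 (hst hx)
  have hy0 : (Submodule.span 𝕜 t)ᗮ.starProjection y = 0 := by
    rw [Submodule.starProjection_orthogonal_apply_eq_zero]
    exact Submodule.subset_span hy
  calc ‖(Submodule.span 𝕜 t)ᗮ.starProjection x‖
      = ‖(Submodule.span 𝕜 t)ᗮ.starProjection (x - y)‖ := by rw [map_sub, hy0, sub_zero]
    _ ≤ ‖x - y‖ := Submodule.norm_starProjection_apply_le _ _
    _ < ε := by rwa [← dist_eq_norm]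

theorem inner_map_eq_neg_inner_map {𝕜 E : Type*} [RCLike 𝕜] [NormedAddCommGroup E]
    [InnerProductSpace 𝕜 E] {J : E →ₗᵢ[𝕜] E} (hJ : ∀ v, J (J v) = -v) (v w : E) :
    inner 𝕜 (J v) w = -inner 𝕜 v (J w) := by
  rw [← J.inner_map_map v (J w), hJ, inner_neg_right, neg_neg]

end Preliminaries

/-- `f : [a, b] → E` is a loop of finite energy `∫ ‖f'‖²`, with velocity `f'`: the closed curves to
which Wirtinger's inequality applies. -/
structure IsFiniteEnergyLoop {E : Type*} [NormedAddCommGroup E] [NormedSpace ℝ E] (a b : ℝ)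
    (f f' : ℝ → E) : Prop where
  continuousOn : ContinuousOn f (Icc a b)
  hasDerivAt : ∀ x ∈ Ioo a b, HasDerivAt f (f' x) x
  memLp_deriv : MemLp f' 2 (volume.restrict (Ioc a b))
  closed : f a = f b

namespace IsFiniteEnergyLoop

section NormedSpace

variable {E F : Type*} [NormedAddCommGroup E] [NormedSpace ℝ E] [NormedAddCommGroup F]
  [NormedSpace ℝ F] {a b : ℝ} {f f' : ℝ → E}

theorem of_norm_deriv_le [CompleteSpace E] {C : ℝ} (hf : ContinuousOn f (Icc a b))
    (hf' : ∀ x ∈ Ioo a b, HasDerivAt f (f' x) x) (hC : ∀ x ∈ Ioo a b, ‖f' x‖ ≤ C)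
    (hclosed : f a = f b) : IsFiniteEnergyLoop a b f f' where
  continuousOn := hf
  hasDerivAt := hf'
  closed := hclosed
  memLp_deriv := by
    rw [← Measure.restrict_congr_set Ioo_ae_eq_Ioc]
    have hderiv : deriv f =ᵐ[volume.restrict (Ioo a b)] f' :=
      ae_restrict_of_forall_mem measurableSet_Ioo fun x hx => (hf' x hx).deriv
    exact .of_bound ((aestronglyMeasurable_deriv f _).congr hderiv) C
      (ae_restrict_of_forall_mem measurableSet_Ioo hC)

theorem memLp (h : IsFiniteEnergyLoop a b f f') : MemLp f 2 (volume.restrict (Ioc a b)) :=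
  memLp_Ioc_of_continuousOn h.continuousOn 2

theorem map (h : IsFiniteEnergyLoop a b f f') (L : E →L[ℝ] F) :
    IsFiniteEnergyLoop a b (fun x => L (f x)) (fun x => L (f' x)) where
  continuousOn := L.continuous.comp_continuousOn h.continuousOn
  hasDerivAt x hx := L.hasFDerivAt.comp_hasDerivAt x (h.hasDerivAt x hx)
  memLp_deriv := L.comp_memLp' h.memLp_deriv
  closed := congrArg L h.closed

theorem sub_const (h : IsFiniteEnergyLoop a b f f') (c : E) :
    IsFiniteEnergyLoop a b (fun x => f x - c) f' where
  continuousOn := h.continuousOn.sub continuousOn_const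
  hasDerivAt x hx := (h.hasDerivAt x hx).sub_const c
  memLp_deriv := h.memLp_deriv
  closed := congrArg (· - c) h.closed

theorem intervalIntegrable (h : IsFiniteEnergyLoop a b f f') (hab : a ≤ b) :
    IntervalIntegrable f volume a b :=
  h.continuousOn.intervalIntegrable_of_Icc hab

theorem intervalIntegrable_deriv (h : IsFiniteEnergyLoop a b f f') (hab : a ≤ b) :
    IntervalIntegrable f' volume a b :=
  (intervalIntegrable_iff_integrableOn_Ioc_of_le hab).2 (h.memLp_deriv.integrable one_le_two)

theorem intervalIntegrable_norm_sq (h : IsFiniteEnergyLoop a b f f') (hab : a ≤ b) :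
    IntervalIntegrable (fun x => ‖f x‖ ^ 2) volume a b :=
  (h.continuousOn.norm.pow 2).intervalIntegrable_of_Icc hab

theorem intervalIntegrable_norm_sq_deriv (h : IsFiniteEnergyLoop a b f f') (hab : a ≤ b) :
    IntervalIntegrable (fun x => ‖f' x‖ ^ 2) volume a b :=
  (intervalIntegrable_iff_integrableOn_Ioc_of_le hab).2 h.memLp_deriv.norm.integrable_sq

theorem integral_deriv_eq_zero [CompleteSpace E] (h : IsFiniteEnergyLoop a b f f') (hab : a ≤ b) :
    ∫ x in a..b, f' x = 0 := by
  rw [intervalIntegral.integral_eq_sub_of_hasDerivAt_of_le hab h.continuousOn h.hasDerivAt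
    (h.intervalIntegrable_deriv hab), h.closed, sub_self]

end NormedSpace

section Wirtinger

variable {a b : ℝ}

theorem norm_fourierCoeffOn_le {f f' : ℝ → ℂ} (h : IsFiniteEnergyLoop a b f f') (hab : a < b)
    {n : ℤ} (hn : n ≠ 0) :
    ‖fourierCoeffOn hab f n‖ ≤ (b - a) / (2 * π) * ‖fourierCoeffOn hab f' n‖ := by
  have hba : 0 < b - a := sub_pos.2 hab
  have hn1 : (1 : ℝ) ≤ |(n : ℝ)| := mod_cast Int.one_le_abs hn
  have hcoeff := fourierCoeffOn_of_hasDerivAt_Ioo hab hn (uIcc_of_le hab.le ▸ h.continuousOn)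
    (by simpa only [min_eq_left hab.le, max_eq_right hab.le] using h.hasDerivAt)
    (h.intervalIntegrable_deriv hab.le)
  have hnorm : ‖fourierCoeffOn hab f n‖ =
      (b - a) / (2 * π * |(n : ℝ)|) * ‖fourierCoeffOn hab f' n‖ := by
    have hlength : ‖(b : ℂ) - a‖ = b - a := by
      rw [← Complex.ofReal_sub, Complex.norm_of_nonneg hba.le]
    rw [hcoeff, h.closed, sub_self, mul_zero, zero_sub]
    simp only [norm_mul, norm_div, norm_neg, norm_one, Complex.norm_ofNat, Complex.norm_real,
      norm_eq_abs, abs_of_pos pi_pos, Complex.norm_I, mul_one, Complex.norm_intCast, hlength]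
    ring
  rw [hnorm]
  exact mul_le_mul_of_nonneg_right (div_le_div_of_nonneg_left hba.le two_pi_pos
    (le_mul_of_one_le_right two_pi_pos.le hn1)) (norm_nonneg _)

theorem wirtinger_inequality_complex {f f' : ℝ → ℂ} (h : IsFiniteEnergyLoop a b f f') (hab : a < b)
    (hmean : ∫ x in a..b, f x = 0) :
    ∫ x in a..b, ‖f x‖ ^ 2 ≤ ((b - a) / (2 * π)) ^ 2 * ∫ x in a..b, ‖f' x‖ ^ 2 := by
  have hcoeff (n : ℤ) : ‖fourierCoeffOn hab f n‖ ^ 2 ≤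
      ((b - a) / (2 * π)) ^ 2 * ‖fourierCoeffOn hab f' n‖ ^ 2 := by
    rcases eq_or_ne n 0 with rfl | hn
    · have hzero : fourierCoeffOn hab f 0 = 0 := by simp [fourierCoeffOn_eq_integral, hmean]
      rw [hzero, norm_zero, zero_pow two_ne_zero]
      positivity
    · rw [← mul_pow]
      gcongr
      exact h.norm_fourierCoeffOn_le hab hn
  have hparseval := hasSum_le hcoeff (hasSum_sq_fourierCoeffOn hab h.memLp)
    ((hasSum_sq_fourierCoeffOn hab h.memLp_deriv).mul_left _)
  rw [smul_eq_mul, smul_eq_mul, mul_left_comm] at hparseval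
  exact le_of_mul_le_mul_left hparseval (inv_pos.2 (sub_pos.2 hab))

variable {E : Type*} [NormedAddCommGroup E] [InnerProductSpace ℝ E] {f f' : ℝ → E}

theorem wirtinger_inequality_of_finiteDimensional [FiniteDimensional ℝ E]
    (h : IsFiniteEnergyLoop a b f f') (hab : a < b) (hmean : ∫ x in a..b, f x = 0) :
    ∫ x in a..b, ‖f x‖ ^ 2 ≤ ((b - a) / (2 * π)) ^ 2 * ∫ x in a..b, ‖f' x‖ ^ 2 := by
  have := FiniteDimensional.complete ℝ E
  let e := stdOrthonormalBasis ℝ E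
  let L i : E →L[ℝ] ℂ := Complex.ofRealCLM ∘L innerSL ℝ (e i)
  have hL (v : E) : ‖v‖ ^ 2 = ∑ i, ‖L i v‖ ^ 2 := by simp [L, e.sum_sq_inner_right]
  have hloop i : IsFiniteEnergyLoop a b (fun x => L i (f x)) (fun x => L i (f' x)) := h.map (L i)
  have hLmean i : ∫ x in a..b, L i (f x) = 0 := by
    rw [(L i).intervalIntegral_comp_comm (h.intervalIntegrable hab.le), hmean, map_zero]
  simp_rw [hL]
  rw [intervalIntegral.integral_finsetSum fun i _ =>
      (hloop i).intervalIntegrable_norm_sq hab.le,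
    intervalIntegral.integral_finsetSum fun i _ =>
      (hloop i).intervalIntegrable_norm_sq_deriv hab.le,
    Finset.mul_sum]
  exact Finset.sum_le_sum fun i _ => (hloop i).wirtinger_inequality_complex hab (hLmean i)

theorem integral_norm_sq_orthogonalProjectionOnto_le [CompleteSpace E]
    (h : IsFiniteEnergyLoop a b f f') (hab : a < b) (hmean : ∫ x in a..b, f x = 0)
    (K : Submodule ℝ E) [FiniteDimensional ℝ K] :
    ∫ x in a..b, ‖K.orthogonalProjectionOnto (f x)‖ ^ 2 ≤
      ((b - a) / (2 * π)) ^ 2 * ∫ x in a..b, ‖f' x‖ ^ 2 := by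
  have hloop := h.map K.orthogonalProjectionOnto
  have hPmean : ∫ x in a..b, K.orthogonalProjectionOnto (f x) = 0 := by
    rw [K.orthogonalProjectionOnto.intervalIntegral_comp_comm (h.intervalIntegrable hab.le), hmean,
      map_zero]
  refine (hloop.wirtinger_inequality_of_finiteDimensional hab hPmean).trans ?_
  gcongr
  refine intervalIntegral.integral_mono_on hab.le (hloop.intervalIntegrable_norm_sq_deriv hab.le)
    (h.intervalIntegrable_norm_sq_deriv hab.le) fun x _ => ?_
  gcongr
  exact K.norm_orthogonalProjectionOnto_apply_le _

theorem wirtinger_inequality [CompleteSpace E] (h : IsFiniteEnergyLoop a b f f') (hab : a < b)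
    (hmean : ∫ x in a..b, f x = 0) :
    ∫ x in a..b, ‖f x‖ ^ 2 ≤ ((b - a) / (2 * π)) ^ 2 * ∫ x in a..b, ‖f' x‖ ^ 2 := by
  have hba : 0 < b - a := sub_pos.2 hab
  refine le_of_forall_pos_le_add fun ε hε => ?_
  obtain ⟨K, _, hK⟩ := exists_finiteDimensional_forall_norm_starProjection_orthogonal_lt (𝕜 := ℝ)
    (isCompact_Icc.image_of_continuousOn h.continuousOn).totallyBounded
    (sqrt_pos.2 (div_pos hε hba))
  have hpythagoras (x : ℝ) (hx : x ∈ Icc a b) :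
      ‖f x‖ ^ 2 ≤ ‖K.orthogonalProjectionOnto (f x)‖ ^ 2 + ε / (b - a) := by
    have hdist : ‖Kᗮ.starProjection (f x)‖ ^ 2 ≤ ε / (b - a) :=
      ((lt_sqrt (norm_nonneg _)).1 (hK (f x) (mem_image_of_mem f hx))).le
    exact (K.norm_sq_eq_add_norm_sq_projection (f x)).trans_le (add_le_add_right hdist _)
  have hproj := (h.map K.orthogonalProjectionOnto).intervalIntegrable_norm_sq hab.le
  calc ∫ x in a..b, ‖f x‖ ^ 2
      ≤ ∫ x in a..b, (‖K.orthogonalProjectionOnto (f x)‖ ^ 2 + ε / (b - a)) :=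
        intervalIntegral.integral_mono_on hab.le (h.intervalIntegrable_norm_sq hab.le)
          (hproj.add intervalIntegrable_const) hpythagoras
    _ = (∫ x in a..b, ‖K.orthogonalProjectionOnto (f x)‖ ^ 2) + ε := by
        rw [intervalIntegral.integral_add hproj intervalIntegrable_const,
          intervalIntegral.integral_const, smul_eq_mul, mul_div_cancel₀ _ hba.ne']
    _ ≤ ((b - a) / (2 * π)) ^ 2 * (∫ x in a..b, ‖f' x‖ ^ 2) + ε := by
        gcongr
        exact h.integral_norm_sq_orthogonalProjectionOnto_le hab hmean K

end Wirtinger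

section Action

variable {E : Type*} [NormedAddCommGroup E] [InnerProductSpace ℝ E] {a b : ℝ}
  {f f' : ℝ → E}

theorem integral_inner_deriv_sub_const (h : IsFiniteEnergyLoop a b f f') (hab : a ≤ b)
    (J : E →L[ℝ] E) (c : E) :
    ∫ x in a..b, ⟪f' x, J (f x - c)⟫ = ∫ x in a..b, ⟪f' x, J (f x)⟫ := by
  have hint : IntervalIntegrable (fun x => ⟪f' x, J (f x)⟫) volume a b :=
    (intervalIntegrable_iff_integrableOn_Ioc_of_le hab).2
      (integrable_inner_of_memLp_two h.memLp_deriv (h.map J).memLp)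
  have hloop := h.map (innerSL ℝ (J c))
  have hconst : ∫ x in a..b, ⟪f' x, J c⟫ = 0 := by
    simpa [real_inner_comm] using hloop.integral_deriv_eq_zero hab
  have hconst_int : IntervalIntegrable (fun x => ⟪f' x, J c⟫) volume a b := by
    simpa [real_inner_comm] using hloop.intervalIntegrable_deriv hab
  simp_rw [map_sub, inner_sub_right]
  rw [intervalIntegral.integral_sub hint hconst_int, hconst, sub_zero]

theorem integral_inner_deriv_le_of_integral_eq_zero [CompleteSpace E]
    (h : IsFiniteEnergyLoop a b f f') (hab : a < b) (hmean : ∫ x in a..b, f x = 0)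
    (J : E →L[ℝ] E) :
    ∫ x in a..b, ⟪f' x, J (f x)⟫ ≤ ‖J‖ * ((b - a) / (2 * π)) * ∫ x in a..b, ‖f' x‖ ^ 2 := by
  have hba : 0 < b - a := sub_pos.2 hab
  have hwirtinger := h.wirtinger_inequality hab hmean
  simp only [intervalIntegral.integral_of_le hab.le] at hwirtinger ⊢
  set energy := ∫ x in Ioc a b, ‖f' x‖ ^ 2
  have henergy : 0 ≤ energy := integral_nonneg fun x => sq_nonneg _
  calc ∫ x in Ioc a b, ⟪f' x, J (f x)⟫
      ≤ ∫ x in Ioc a b, ‖J‖ * (‖f' x‖ * ‖f x‖) := by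
        refine integral_mono (integrable_inner_of_memLp_two h.memLp_deriv (h.map J).memLp)
          ((h.memLp_deriv.norm.integrable_mul h.memLp.norm).const_mul ‖J‖) fun x => ?_
        calc ⟪f' x, J (f x)⟫ ≤ ‖f' x‖ * (‖J‖ * ‖f x‖) :=
              (real_inner_le_norm _ _).trans (by gcongr; exact J.le_opNorm _)
          _ = ‖J‖ * (‖f' x‖ * ‖f x‖) := mul_left_comm _ _ _
    _ = ‖J‖ * ∫ x in Ioc a b, ‖f' x‖ * ‖f x‖ := integral_const_mul _ _
    _ ≤ ‖J‖ * (√energy * √(∫ x in Ioc a b, ‖f x‖ ^ 2)) := by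
        gcongr
        exact integral_norm_mul_norm_le_sqrt_mul_sqrt h.memLp_deriv h.memLp
    _ ≤ ‖J‖ * (√energy * ((b - a) / (2 * π) * √energy)) := by
        gcongr
        refine (sqrt_le_sqrt hwirtinger).trans_eq ?_
        rw [sqrt_mul (sq_nonneg _), sqrt_sq (div_pos hba two_pi_pos).le]
    _ = ‖J‖ * ((b - a) / (2 * π)) * energy := by
        rw [mul_left_comm √energy, mul_self_sqrt henergy, mul_assoc]

theorem integral_inner_deriv_le [CompleteSpace E] (h : IsFiniteEnergyLoop a b f f') (hab : a < b)
    (J : E →L[ℝ] E) :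
    ∫ x in a..b, ⟪f' x, J (f x)⟫ ≤ ‖J‖ * ((b - a) / (2 * π)) * ∫ x in a..b, ‖f' x‖ ^ 2 := by
  let m := ⨍ x in Ioc a b, f x
  have hmean : ∫ x in a..b, (f x - m) = 0 := by
    rw [intervalIntegral.integral_of_le hab.le]
    exact integral_sub_average _ _
  rw [← h.integral_inner_deriv_sub_const hab.le J m]
  exact (h.sub_const m).integral_inner_deriv_le_of_integral_eq_zero hab hmean J

end Action

end IsFiniteEnergyLoop

/-- `v` is the value at `x` of the Reeb vector field of the contact form `α_x(X) = ½⟪X, J x⟫` on a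
hypersurface through `x` with unit normal `ν`. The tangent space is `ν^⊥`, and `dα(X, Y) = ⟪J X, Y⟫`
for skew `J`, so `ι(v) dα = 0` on it becomes `⟪J v, Y⟫ = 0` for all `Y ⊥ ν`. Tangency of `v` is not
a field: `J v` is then a multiple of `ν`, while `⟪J v, v⟫ = 0`. -/
structure IsReebVector {E : Type*} [NormedAddCommGroup E] [InnerProductSpace ℝ E] (J : E → E)
    (ν x v : E) : Prop where
  contact_eq_one : (1 / 2 : ℝ) * ⟪v, J x⟫ = 1
  inner_apply_eq_zero : ∀ Y : E, ⟪ν, Y⟫ = 0 → ⟪J v, Y⟫ = 0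

section Reeb

variable {E : Type*} [NormedAddCommGroup E] [InnerProductSpace ℝ E]

namespace IsReebVector

variable {ν x v : E}

theorem exists_smul_normal_eq {J : E → E} (h : IsReebVector J ν x v) : ∃ c : ℝ, c • ν = J v := by
  rw [← Submodule.mem_span_singleton, ← (ℝ ∙ ν).orthogonal_orthogonal]
  intro Y hY
  rw [real_inner_comm]
  exact h.inner_apply_eq_zero Y (Submodule.mem_orthogonal_singleton_iff_inner_right.1 hY)

theorem norm_le {J : E →ₗᵢ[ℝ] E} (hJ : ∀ v, J (J v) = -v) (h : IsReebVector J ν x v)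
    (hν : ‖ν‖ = 1) {R : ℝ} (hR : 0 < R) (hx : R ≤ ⟪ν, x⟫) : ‖v‖ ≤ 2 / R := by
  obtain ⟨c, hc⟩ := h.exists_smul_normal_eq
  have hcv : |c| = ‖v‖ := by rw [← J.norm_map v, ← hc, norm_smul, hν, mul_one, norm_eq_abs]
  have hcx : c * ⟪ν, x⟫ = -2 := by
    rw [← real_inner_smul_left, hc, inner_map_eq_neg_inner_map hJ]
    linarith [h.contact_eq_one]
  rw [le_div_iff₀ hR]
  calc ‖v‖ * R ≤ |c| * |⟪ν, x⟫| := by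
        rw [hcv]
        gcongr
        exact hx.trans (le_abs_self _)
    _ = 2 := by rw [← abs_mul, hcx, abs_neg, abs_two]

end IsReebVector

theorem stmt13_general [CompleteSpace E] (J : E →ₗᵢ[ℝ] E) (hJ : ∀ v, J (J v) = -v) {R T : ℝ}
    (hR : 0 < R) (hT : 0 < T) {γ γ' ν : ℝ → E} (hγc : ContinuousOn γ (Icc 0 T))
    (hγ : ∀ t ∈ Ioo 0 T, HasDerivAt γ (γ' t) t) (hclosed : γ 0 = γ T)
    (hν : ∀ t ∈ Ioo 0 T, ‖ν t‖ = 1) (hνγ : ∀ t ∈ Ioo 0 T, R ≤ ⟪ν t, γ t⟫)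
    (hReeb : ∀ t ∈ Ioo 0 T, IsReebVector J (ν t) (γ t) (γ' t)) :
    π * R ^ 2 ≤ T := by
  have hspeed : ∀ t ∈ Ioo 0 T, ‖γ' t‖ ≤ 2 / R := fun t ht =>
    (hReeb t ht).norm_le hJ (hν t ht) hR (hνγ t ht)
  have hloop : IsFiniteEnergyLoop 0 T γ γ' := .of_norm_deriv_le hγc hγ hspeed hclosed
  have haction : ∫ t in 0..T, ⟪γ' t, J (γ t)⟫ = 2 * T := by
    have hrate : EqOn (fun t => ⟪γ' t, J (γ t)⟫) (fun _ => 2) (Ioo 0 T) := fun t ht => by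
      linarith [(hReeb t ht).contact_eq_one]
    rw [intervalIntegral.integral_congr_Ioo_of_le hT.le hrate, intervalIntegral.integral_const,
      sub_zero, smul_eq_mul, mul_comm]
  have henergy : ∫ t in 0..T, ‖γ' t‖ ^ 2 ≤ T * (2 / R) ^ 2 := by
    simpa using intervalIntegral.integral_mono_on_of_le_Ioo hT.le
      (hloop.intervalIntegrable_norm_sq_deriv hT.le) intervalIntegrable_const
      fun t ht => pow_le_pow_left₀ (norm_nonneg _) (hspeed t ht) 2
  have hbound : 2 * T ≤ 2 * T * (T / (π * R ^ 2)) := calc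
    2 * T ≤ ‖J.toContinuousLinearMap‖ * (T / (2 * π)) * ∫ t in 0..T, ‖γ' t‖ ^ 2 := by
      simpa [haction] using hloop.integral_inner_deriv_le hT J.toContinuousLinearMap
    _ ≤ 1 * (T / (2 * π)) * (T * (2 / R) ^ 2) := by
      gcongr
      · exact intervalIntegral.integral_nonneg hT.le fun _ _ => sq_nonneg _
      · exact J.norm_toContinuousLinearMap_le
    _ = 2 * T * (T / (π * R ^ 2)) := by field_simp
  have hratio : 1 ≤ T / (π * R ^ 2) := by
    rwa [le_mul_iff_one_le_right (by positivity)] at hbound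
  rwa [one_le_div (by positivity)] at hratio

end Reeb

/-- lower bound `T ≥ π R₁²` for the period of a closed Reeb
orbit on a hypersurface `Σ ⊂ ℝ^{2n}` (modelled as a real inner product space
with isometric complex structure `J`) whose exterior unit normal `ν`
satisfies `⟨ν(z), z⟩ > R₁` along the orbit; the contact form is
`α_x(X) = ½⟨X, Jx⟩`, and the Reeb condition is expressed by `α(γ') = 1`
together with `⟨Jγ', Y⟩ = 0` for all tangent vectors `Y ⊥ ν`. -/
theorem stmt13 {E : Type*} [NormedAddCommGroup E] [InnerProductSpace ℝ E]
    [FiniteDimensional ℝ E]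
    (J : E →ₗ[ℝ] E) (hJiso : ∀ v w : E, ⟪J v, J w⟫ = ⟪v, w⟫)
    (hJsq : ∀ v : E, J (J v) = -v)
    (R₁ T : ℝ) (hR₁ : 0 < R₁) (hT : 0 < T)
    (γ γ' : ℝ → E) (hγ : ∀ t, HasDerivAt γ (γ' t) t) (hγ'c : Continuous γ')
    (hper : ∀ t, γ (t + T) = γ t)
    (ν : ℝ → E) (hν : ∀ t, ‖ν t‖ = 1)
    (hνγ : ∀ t, R₁ < ⟪ν t, γ t⟫)
    (hα : ∀ t, (1 / 2 : ℝ) * ⟪γ' t, J (γ t)⟫ = 1)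
    (hReeb : ∀ t, ∀ Y : E, ⟪ν t, Y⟫ = 0 → ⟪J (γ' t), Y⟫ = 0) :
    Real.pi * R₁ ^ 2 ≤ T := by
  have := FiniteDimensional.complete ℝ E
  exact stmt13_general (J.isometryOfInner hJiso) hJsq hR₁ hT
    (HasDerivAt.continuousOn fun t _ => hγ t) (fun t _ => hγ t) (by simpa using (hper 0).symm)
    (fun t _ => hν t) (fun t _ => (hνγ t).le) fun t _ => ⟨hα t, hReeb t⟩
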